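/- Every word w of length k+1 over Z/mZ admits exactly one successful partition: the splitting of w into m labeled consecutive blocks on which the recovery algorithm succeeds is unique. -/

import Mathlib

/-- The recovery algorithm: starting at block `t`, repeatedly remove the leftmost
letter `v` of the current block, output `t + v`, and move to block `t + v`.
It returns `none` if it ever attempts to read from an empty block; otherwise it
returns the list of outputs together with the final state of the blocks. -/
def recover (m : ℕ) : ℕ → ZMod m → (ZMod m → List (ZMod m)) →
    Option (List (ZMod m) × (ZMod m → List (ZMod m)))
  | 0, _, B => some ([], B)
  | n + 1, t, B =>
    match B t with
    | [] => none
    | v :: rest =>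
      (recover m n (t + v) (Function.update B t rest)).map
        (fun r => ((t + v) :: r.1, r.2))

/-- Concatenation of the blocks of `B` in cyclic label order starting at label `s`. -/
def concatFrom (m : ℕ) (s : ZMod m) (B : ZMod m → List (ZMod m)) : List (ZMod m) :=
  (List.range m).flatMap (fun j => B (s + (j : ℕ)))

/-! A successful run of the recovery algorithm from `t` is determined by the labels `os` it visits
after `t`, which also determine the blocks it empties, `walkBlocks t os`. The theorem thus says that
the length-preserving map `walkWord t`, which sends `os` to the concatenation of these blocks, is a
bijection, and by finiteness injectivity is enough.

Suppose two walks give the same word, and let `P u` and `P' u` be the prefixes of it that end with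
block `u`. Read a letter `v` at label `u` as an edge from `u` to `u + v`. As each walk arrives at
and departs from each label equally often, up to its two ends, the differences of the letter counts
of `P' u` and `P u` form a balanced flow. Let `S` be the set of `u` for which `P' u` is longer than
`P u`. Flow is nonnegative out of `S` and nonpositive out of its complement, so by balance none goes
from `S` to its complement. But the second walk ends outside `S`, and when it leaves `S` for the
last time it reads the last letter of some `P' x` with `x ∈ S`, which contributes to that flow.
Hence `S` is empty, and by symmetry the two families of prefixes agree. -/

theorem flow_eq_zero_of_balanced {α G : Type*} [Fintype α] [AddCommGroup G]
    [PartialOrder G] [IsOrderedAddMonoid G] {S : Finset α} {g : α → α → G}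
    (hbal : ∀ u ∈ S, ∑ x, g u x = ∑ x, g x u) (hpos : ∀ u ∈ S, ∀ x ∉ S, 0 ≤ g u x)
    (hneg : ∀ u ∉ S, ∀ x ∈ S, g u x ≤ 0) {u x : α} (hu : u ∈ S) (hx : x ∉ S) : g u x = 0 := by
  classical
  have hcut : ∑ a ∈ S, ∑ y ∈ Sᶜ, g a y = ∑ a ∈ S, ∑ y ∈ Sᶜ, g y a := by
    have htotal : ∑ a ∈ S, ∑ y, g a y = ∑ a ∈ S, ∑ y, g y a :=
      Finset.sum_congr rfl hbal
    simp_rw [← Finset.sum_add_sum_compl S, Finset.sum_add_distrib] at htotal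
    rw [Finset.sum_comm (f := g)] at htotal
    exact add_left_cancel htotal
  have hin : ∑ a ∈ S, ∑ y ∈ Sᶜ, g y a ≤ 0 :=
    Finset.sum_nonpos fun a ha => Finset.sum_nonpos fun y hy => hneg y (Finset.mem_compl.1 hy) a ha
  have hout : ∀ a ∈ S, 0 ≤ ∑ y ∈ Sᶜ, g a y := fun a ha =>
    Finset.sum_nonneg fun y hy => hpos a ha y (Finset.mem_compl.1 hy)
  have hzero : ∑ a ∈ S, ∑ y ∈ Sᶜ, g a y = 0 :=
    le_antisymm (hcut.trans_le hin) (Finset.sum_nonneg hout)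
  have hzero_u : ∑ y ∈ Sᶜ, g u y = 0 := (Finset.sum_eq_zero_iff_of_nonneg hout).1 hzero u hu
  exact (Finset.sum_eq_zero_iff_of_nonneg fun y hy => hpos u hu y (Finset.mem_compl.1 hy)).1
    hzero_u x (Finset.mem_compl.2 hx)

theorem sum_comp_sub_right {A M : Type*} [Fintype A] [AddGroup A] [AddCommMonoid M] (f : A → M)
    (a : A) : ∑ x, f (x - a) = ∑ x, f x :=
  (Equiv.subRight a).sum_comp f

theorem count_lt_count_of_isPrefix {α : Type*} [DecidableEq α] {p l : List α} {v : α}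
    (hp : p <+: l) (hlt : p.length < l.length) (hv : [v] <:+ l) : p.count v < l.count v := by
  obtain ⟨q, rfl⟩ := hv
  rcases List.prefix_concat_iff.1 hp with rfl | hpq
  · exact absurd hlt (lt_irrefl _)
  · rw [List.count_append, List.count_singleton_self]
    exact Nat.lt_succ_of_le (hpq.sublist.count_le v)

section CyclicInduction

variable {m : ℕ} [NeZero m]

theorem zmod_cyclic_induction {p : ZMod m → Prop} (s : ZMod m) (base : p s)
    (step : ∀ u, u ≠ s → p (u - 1) → p u) (u : ZMod m) : p u := by
  have shifted : ∀ n : ℕ, p (s + n) := by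
    intro n
    induction n with
    | zero => simpa using base
    | succ n ih =>
      by_cases h : s + (n + 1 : ℕ) = s
      · rwa [h]
      · exact step _ h (by simpa [← add_assoc] using ih)
  simpa using shifted (u - s).val

theorem eq_zero_of_add_one_eq_of_sum_eq_zero {M : Type*} [AddCommMonoid M] [IsAddTorsionFree M]
    {D : ZMod m → M} (hD : ∀ x, D (x + 1) = D x) (hsum : ∑ x, D x = 0) (x : ZMod m) : D x = 0 := by
  have hconst : ∀ y, D y = D x :=
    zmod_cyclic_induction x rfl fun y _ ih => by rw [← ih, ← hD (y - 1), sub_add_cancel]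
  simpa [hconst, NeZero.ne m] using hsum

theorem zmod_val_sub_one_add_one {x : ZMod m} (hx : x ≠ 0) : (x - 1).val + 1 = x.val := by
  have hpos : 0 < x.val := ZMod.val_pos.2 hx
  have hcast : ((x.val - 1 : ℕ) : ZMod m) = x - 1 := by
    rw [Nat.cast_pred hpos, ZMod.natCast_zmod_val]
  have hlt := x.val_lt
  rw [← hcast, ZMod.val_cast_of_lt (by lia)]
  lia

end CyclicInduction

/-- The concatenation of the blocks of `B` in cyclic label order from label `s` through label `u`.
As a function of `u` it is again a family of blocks. -/
def prefixThrough {m : ℕ} (s : ZMod m) (B : ZMod m → List (ZMod m)) (u : ZMod m) :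
    List (ZMod m) :=
  (List.range ((u - s).val + 1)).flatMap fun j => B (s + (j : ℕ))

section Prefix

variable {m : ℕ}

theorem prefixThrough_self (s : ZMod m) (B : ZMod m → List (ZMod m)) :
    prefixThrough s B s = B s := by
  simp [prefixThrough]

variable [NeZero m]

theorem prefixThrough_of_ne {s u : ZMod m} (B : ZMod m → List (ZMod m)) (hu : u ≠ s) :
    prefixThrough s B u = prefixThrough s B (u - 1) ++ B u := by
  have hval := zmod_val_sub_one_add_one (sub_ne_zero.2 hu)
  rw [prefixThrough, prefixThrough, sub_right_comm, hval, List.range_succ, List.flatMap_append]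
  simp

theorem prefixThrough_sub_one (s : ZMod m) (B : ZMod m → List (ZMod m)) :
    prefixThrough s B (s - 1) = concatFrom m s B := by
  obtain ⟨n, rfl⟩ := Nat.exists_eq_succ_of_ne_zero (NeZero.ne m)
  rw [prefixThrough, concatFrom, sub_right_comm, sub_self, zero_sub, ZMod.val_neg_one]

theorem prefixThrough_isPrefix (s : ZMod m) (B : ZMod m → List (ZMod m)) (u : ZMod m) :
    prefixThrough s B u <+: concatFrom m s B := by
  have hrange : List.range ((u - s).val + 1) <+: List.range m := by
    rw [← min_eq_left (Nat.add_one_le_of_lt (u - s).val_lt), ← List.take_range]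
    exact List.take_prefix _ _
  exact hrange.flatMap _

theorem prefixThrough_injective (s : ZMod m) :
    Function.Injective (prefixThrough (m := m) s) := by
  intro B B' h
  funext u
  by_cases hu : u = s
  · rw [hu, ← prefixThrough_self s B, ← prefixThrough_self s B', h]
  · have hu_eq := congrFun h u
    rw [prefixThrough_of_ne B hu, prefixThrough_of_ne B' hu, h] at hu_eq
    exact List.append_cancel_left hu_eq

theorem suffix_prefixThrough (s : ZMod m) (B : ZMod m → List (ZMod m)) (u : ZMod m) :
    B u <:+ prefixThrough s B u := by
  by_cases hu : u = s
  · rw [hu, prefixThrough_self]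
  · rw [prefixThrough_of_ne B hu]
    exact List.suffix_append _ _

variable {s : ZMod m} {B B' : ZMod m → List (ZMod m)}

theorem prefixThrough_isPrefix_of_length_le (hW : concatFrom m s B = concatFrom m s B')
    {u : ZMod m} (hle : (prefixThrough s B u).length ≤ (prefixThrough s B' u).length) :
    prefixThrough s B u <+: prefixThrough s B' u :=
  List.prefix_of_prefix_length_le (hW ▸ prefixThrough_isPrefix s B u)
    (prefixThrough_isPrefix s B' u) hle

theorem length_prefixThrough_le_of_forall_eq_nil
    (h : ∀ x, (prefixThrough s B x).length < (prefixThrough s B' x).length → B' x = [])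
    (u : ZMod m) : (prefixThrough s B' u).length ≤ (prefixThrough s B u).length := by
  induction u using zmod_cyclic_induction s with
  | base =>
    by_contra! hlt
    simp [prefixThrough_self, h s hlt] at hlt
  | step u hu ih =>
    by_contra! hlt
    have hnil := h u hlt
    rw [prefixThrough_of_ne B hu, prefixThrough_of_ne B' hu, hnil] at hlt
    simp only [List.length_append, List.length_nil] at hlt
    lia

theorem apply_block_add_apply_prefixThrough {M : Type*} [AddCommMonoid M]
    {f : List (ZMod m) → M} (hf : ∀ l l', f (l ++ l') = f l + f l') (s : ZMod m)
    (B : ZMod m → List (ZMod m)) (u : ZMod m) :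
    f (B u) + f (prefixThrough s B (u - 1)) =
      f (prefixThrough s B u) + if u = s then f (concatFrom m s B) else 0 := by
  by_cases hu : u = s
  · rw [if_pos hu, hu, prefixThrough_self, prefixThrough_sub_one]
  · rw [if_neg hu, prefixThrough_of_ne B hu, hf, add_zero, add_comm]

theorem sum_apply_block {M : Type*} [AddCancelCommMonoid M] {f : List (ZMod m) → M}
    (hf : ∀ l l', f (l ++ l') = f l + f l') (s : ZMod m) (B : ZMod m → List (ZMod m)) :
    ∑ u, f (B u) = f (concatFrom m s B) := by
  have hsum := Fintype.sum_congr _ _ fun u =>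
    apply_block_add_apply_prefixThrough hf s B u
  rw [Finset.sum_add_distrib, Finset.sum_add_distrib,
    sum_comp_sub_right fun u => f (prefixThrough s B u), add_comm] at hsum
  simpa using hsum

end Prefix

section Arrivals

variable {m : ℕ} [NeZero m]

/-- The number of letters of `B` that send the recovery algorithm to block `x`; a letter `v` of
block `u` sends it to block `u + v`. -/
def arrivals (B : ZMod m → List (ZMod m)) (x : ZMod m) : ℕ :=
  ∑ u, (B u).count (x - u)

theorem sum_count_sub (l : List (ZMod m)) (u : ZMod m) : ∑ x, l.count (x - u) = l.length := by
  rw [sum_comp_sub_right fun x => l.count x]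
  simpa using Multiset.sum_count_eq_card (s := Finset.univ) (m := (l : Multiset (ZMod m)))
    fun _ _ => Finset.mem_univ _

theorem sum_arrivals (B : ZMod m → List (ZMod m)) :
    ∑ x, arrivals B x = ∑ u, (B u).length := by
  simp_rw [arrivals]
  rw [Finset.sum_comm]
  simp_rw [sum_count_sub]

theorem arrivals_add_one_add_arrivals_prefixThrough (s : ZMod m) (B : ZMod m → List (ZMod m))
    (x : ZMod m) :
    arrivals B (x + 1) + arrivals (prefixThrough s B) x =
      arrivals (prefixThrough s B) (x + 1) + (concatFrom m s B).count (x + 1 - s) := by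
  have hshift : arrivals (prefixThrough s B) x =
      ∑ u, (prefixThrough s B (u - 1)).count (x + 1 - u) := by
    rw [arrivals, ← sum_comp_sub_right _ 1]
    simp only [sub_sub_eq_add_sub]
  rw [hshift, arrivals, arrivals, ← Finset.sum_add_distrib]
  simp_rw [apply_block_add_apply_prefixThrough
    (f := List.count (x + 1 - _)) (fun _ _ => List.count_append) s B]
  rw [Finset.sum_add_distrib]
  simp

theorem prefixThrough_balanced {s : ZMod m} {B B' : ZMod m → List (ZMod m)}
    (hW : concatFrom m s B = concatFrom m s B')
    (hbal : ∀ x, arrivals B x + (B' x).length = arrivals B' x + (B x).length) (x : ZMod m) :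
    arrivals (prefixThrough s B) x + (prefixThrough s B' x).length =
      arrivals (prefixThrough s B') x + (prefixThrough s B x).length := by
  let D : ZMod m → ℤ := fun x =>
    (arrivals (prefixThrough s B) x + (prefixThrough s B' x).length) -
      (arrivals (prefixThrough s B') x + (prefixThrough s B x).length)
  have hstep : ∀ x, D (x + 1) = D x := by
    intro x
    have harr := arrivals_add_one_add_arrivals_prefixThrough s B x
    have harr' := arrivals_add_one_add_arrivals_prefixThrough s B' x
    have hlen := apply_block_add_apply_prefixThrough (f := List.length)
      (fun _ _ => List.length_append) s B (x + 1)
    have hlen' := apply_block_add_apply_prefixThrough (f := List.length)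
      (fun _ _ => List.length_append) s B' (x + 1)
    have hbal_x := hbal (x + 1)
    rw [add_sub_cancel_right, hW] at hlen
    rw [add_sub_cancel_right] at hlen'
    rw [hW] at harr
    simp only [D]
    lia
  have hsum : ∑ x, D x = 0 := by
    simp only [D, Finset.sum_sub_distrib, Finset.sum_add_distrib, ← Nat.cast_sum, sum_arrivals]
    ring
  have hzero := eq_zero_of_add_one_eq_of_sum_eq_zero hstep hsum x
  simp only [D] at hzero
  lia

theorem count_prefixThrough_eq_of_exit {s : ZMod m} {B B' : ZMod m → List (ZMod m)}
    (hW : concatFrom m s B = concatFrom m s B')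
    (hbal : ∀ x, arrivals B x + (B' x).length = arrivals B' x + (B x).length) {u v : ZMod m}
    (hu : (prefixThrough s B u).length < (prefixThrough s B' u).length)
    (hv : ¬ (prefixThrough s B (u + v)).length < (prefixThrough s B' (u + v)).length) :
    (prefixThrough s B u).count v = (prefixThrough s B' u).count v := by
  let S : Finset (ZMod m) :=
    {x | (prefixThrough s B x).length < (prefixThrough s B' x).length}
  have hmem : ∀ x, x ∈ S ↔
      (prefixThrough s B x).length < (prefixThrough s B' x).length := by simp [S]
  let g : ZMod m → ZMod m → ℤ := fun a x =>
    (prefixThrough s B' a).count (x - a) - (prefixThrough s B a).count (x - a)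
  have hflow : ∀ x ∈ S, ∑ y, g x y = ∑ y, g y x := by
    intro x _
    have hbal_x := prefixThrough_balanced hW hbal x
    simp only [g, Finset.sum_sub_distrib, ← Nat.cast_sum, sum_count_sub]
    simp only [arrivals] at hbal_x
    lia
  have hpos : ∀ a ∈ S, ∀ x ∉ S, 0 ≤ g a x := fun a ha x _ =>
    sub_nonneg.2 <| Nat.cast_le.2 <|
      (prefixThrough_isPrefix_of_length_le hW ((hmem a).1 ha).le).sublist.count_le _
  have hneg : ∀ a ∉ S, ∀ x ∈ S, g a x ≤ 0 := fun a ha x _ =>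
    sub_nonpos.2 <| Nat.cast_le.2 <|
      (prefixThrough_isPrefix_of_length_le hW.symm (not_lt.1 (mt (hmem a).2 ha))).sublist.count_le _
  have hzero : g u (u + v) = 0 :=
    flow_eq_zero_of_balanced hflow hpos hneg ((hmem u).2 hu) (mt (hmem (u + v)).1 hv)
  simp only [g, add_sub_cancel_left] at hzero
  lia

end Arrivals

/-- The blocks that the recovery algorithm empties when it starts at `t` and then visits the
labels `os`: block `u` lists the steps of this walk that depart from `u`. -/
def walkBlocks {m : ℕ} : ZMod m → List (ZMod m) → ZMod m → List (ZMod m)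
  | _, [], _ => []
  | t, o :: os, u => if u = t then (o - t) :: walkBlocks o os u else walkBlocks o os u

section WalkBlocks

variable {m : ℕ}

theorem recover_walkBlocks (t : ZMod m) (os : List (ZMod m)) :
    recover m os.length t (walkBlocks t os) = some (os, fun _ => []) := by
  induction os generalizing t with
  | nil => rfl
  | cons o os ih =>
    have hupdate : Function.update (walkBlocks t (o :: os)) t (walkBlocks o os t) =
        walkBlocks o os := by
      funext u
      by_cases hu : u = t <;> simp [hu, walkBlocks]
    rw [List.length_cons, recover, walkBlocks, if_pos rfl]
    simp [hupdate, ih]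

theorem walkBlocks_of_recover {n : ℕ} {t : ZMod m} {B : ZMod m → List (ZMod m)}
    {os : List (ZMod m)} (h : recover m n t B = some (os, fun _ => [])) :
    os.length = n ∧ walkBlocks t os = B := by
  induction n generalizing t B os with
  | zero =>
    obtain ⟨rfl, rfl⟩ : [] = os ∧ B = fun _ => [] := by simpa [recover] using h
    exact ⟨rfl, rfl⟩
  | succ n ih =>
    rw [recover] at h
    split at h
    · contradiction
    · next v rest hB =>
      obtain ⟨⟨os', C⟩, hrec, hout⟩ := Option.map_eq_some_iff.1 h
      obtain ⟨rfl, rfl⟩ := Prod.mk.inj hout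
      obtain ⟨hlen, hblocks⟩ := ih hrec
      refine ⟨congrArg Nat.succ hlen, funext fun u => ?_⟩
      by_cases hu : u = t
      · simp [walkBlocks, hblocks, hu, hB]
      · simp [walkBlocks, hblocks, hu]

theorem walkBlocks_eq_nil_of_notMem {t x : ZMod m} {os : List (ZMod m)} (hx : x ∉ t :: os) :
    walkBlocks t os x = [] := by
  induction os generalizing t with
  | nil => rfl
  | cons o os ih =>
    obtain ⟨hxt, hxos⟩ := not_or.1 (mt List.mem_cons.2 hx)
    rw [walkBlocks, if_neg hxt, ih hxos]

theorem exists_last_exit {S : Set (ZMod m)} {t : ZMod m} {os : List (ZMod m)}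
    (hend : os.getLastD t ∉ S) (hvisit : ∃ x ∈ t :: os, x ∈ S) :
    ∃ x ∈ S, ∃ v, [v] <:+ walkBlocks t os x ∧ x + v ∉ S := by
  induction os generalizing t with
  | nil =>
    obtain ⟨x, hx, hxS⟩ := hvisit
    rw [List.mem_singleton.1 hx] at hxS
    exact absurd hxS hend
  | cons o os ih =>
    rw [List.getLastD_cons] at hend
    by_cases hlater : ∃ x ∈ o :: os, x ∈ S
    · obtain ⟨x, hxS, v, hv, hexit⟩ := ih hend hlater
      refine ⟨x, hxS, v, hv.trans ?_, hexit⟩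
      rw [walkBlocks]
      split
      · exact List.suffix_cons _ _
      · exact List.suffix_rfl
    · push Not at hlater
      have htS : t ∈ S := by
        obtain ⟨x, hx, hxS⟩ := hvisit
        rcases List.mem_cons.1 hx with rfl | hx
        · exact hxS
        · exact absurd hxS (hlater x hx)
      have hrest : walkBlocks o os t = [] :=
        walkBlocks_eq_nil_of_notMem fun ht => hlater t ht htS
      refine ⟨t, htS, o - t, by simp [walkBlocks, hrest], ?_⟩
      rw [add_sub_cancel]
      exact hlater o List.mem_cons_self

theorem length_walkBlocks_add (t : ZMod m) (os : List (ZMod m)) (x : ZMod m) :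
    (walkBlocks t os x).length + (if x = os.getLastD t then 1 else 0) =
      os.count x + if x = t then 1 else 0 := by
  induction os generalizing t with
  | nil => simp [walkBlocks]
  | cons o os ih =>
    have ih_o := ih o
    rw [List.getLastD_cons, walkBlocks, List.count_cons]
    simp only [beq_iff_eq, eq_comm (a := o)]
    by_cases hx : x = t <;> simp only [hx, if_true, if_false, List.length_cons] <;> lia

variable [NeZero m]

theorem sum_walkBlocks_cons {M : Type*} [AddCommMonoid M] {f : ZMod m → List (ZMod m) → M}
    {c : M} (t o : ZMod m) (os : List (ZMod m))
    (hf : f t ((o - t) :: walkBlocks o os t) = c + f t (walkBlocks o os t)) :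
    ∑ u, f u (walkBlocks t (o :: os) u) = c + ∑ u, f u (walkBlocks o os u) := by
  have hpoint : ∀ u, f u (walkBlocks t (o :: os) u) =
      (if u = t then c else 0) + f u (walkBlocks o os u) := by
    intro u
    by_cases hu : u = t
    · rw [hu, walkBlocks, if_pos rfl, if_pos rfl, hf]
    · rw [walkBlocks, if_neg hu, if_neg hu, zero_add]
  simp [hpoint, Finset.sum_add_distrib]

theorem arrivals_walkBlocks (t : ZMod m) (os : List (ZMod m)) (x : ZMod m) :
    arrivals (walkBlocks t os) x = os.count x := by
  induction os generalizing t with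
  | nil => simp [arrivals, walkBlocks]
  | cons o os ih =>
    rw [arrivals, sum_walkBlocks_cons (f := fun u l => l.count (x - u))
      (c := if o = x then 1 else 0) t o os (by simp [List.count_cons, add_comm]),
      ← arrivals, ih, List.count_cons, add_comm]
    simp

theorem sum_sum_walkBlocks (t : ZMod m) (os : List (ZMod m)) :
    ∑ u, (walkBlocks t os u).sum = os.getLastD t - t := by
  induction os generalizing t with
  | nil => simp [walkBlocks]
  | cons o os ih =>
    rw [sum_walkBlocks_cons (f := fun _ => List.sum) t o os List.sum_cons, ih,
      List.getLastD_cons]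
    abel

theorem sum_length_walkBlocks (t : ZMod m) (os : List (ZMod m)) :
    ∑ u, (walkBlocks t os u).length = os.length := by
  rw [← sum_arrivals]
  simp_rw [arrivals_walkBlocks]
  simpa using sum_count_sub os 0

theorem walkBlocks_balanced {t : ZMod m} {os os' : List (ZMod m)}
    (hend : os.getLastD t = os'.getLastD t) (x : ZMod m) :
    arrivals (walkBlocks t os) x + (walkBlocks t os' x).length =
      arrivals (walkBlocks t os') x + (walkBlocks t os x).length := by
  have hlen := length_walkBlocks_add t os x
  have hlen' := length_walkBlocks_add t os' x
  rw [hend] at hlen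
  rw [arrivals_walkBlocks, arrivals_walkBlocks]
  lia

end WalkBlocks

section WalkWord

variable {m : ℕ} [NeZero m]

/-- The word whose successful partition, for the algorithm started at `t`, is `walkBlocks t os`.
The first label is one more than the last label visited, which is `t` plus the sum of the word. -/
def walkWord (t : ZMod m) (os : List (ZMod m)) : List (ZMod m) :=
  concatFrom m (os.getLastD t + 1) (walkBlocks t os)

theorem length_walkWord (t : ZMod m) (os : List (ZMod m)) :
    (walkWord t os).length = os.length := by
  rw [walkWord, ← sum_apply_block (fun _ _ => List.length_append), sum_length_walkBlocks]

theorem getLastD_eq_add_sum_concatFrom (s t : ZMod m) (os : List (ZMod m)) :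
    os.getLastD t = t + (concatFrom m s (walkBlocks t os)).sum := by
  rw [← sum_apply_block (fun _ _ => List.sum_append), sum_sum_walkBlocks, add_sub_cancel]

theorem concatFrom_walkBlocks_eq_iff {t : ZMod m} {os W : List (ZMod m)} :
    concatFrom m (t + W.sum + 1) (walkBlocks t os) = W ↔ walkWord t os = W := by
  constructor
  · intro h
    rw [walkWord, getLastD_eq_add_sum_concatFrom (t + W.sum + 1), h, h]
  · rintro rfl
    rw [walkWord, ← getLastD_eq_add_sum_concatFrom]

theorem length_prefixThrough_walkBlocks_le {s t : ZMod m} {os os' : List (ZMod m)}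
    (hs : s = os'.getLastD t + 1)
    (hW : concatFrom m s (walkBlocks t os) = concatFrom m s (walkBlocks t os')) (u : ZMod m) :
    (prefixThrough s (walkBlocks t os') u).length ≤
      (prefixThrough s (walkBlocks t os) u).length := by
  let S : Set (ZMod m) := {x | (prefixThrough s (walkBlocks t os) x).length <
    (prefixThrough s (walkBlocks t os') x).length}
  have hend : os.getLastD t = os'.getLastD t := by
    rw [getLastD_eq_add_sum_concatFrom s, hW, ← getLastD_eq_add_sum_concatFrom]
  have hend_notMem : os'.getLastD t ∉ S := by
    rw [← add_sub_cancel_right (os'.getLastD t) 1, ← hs]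
    simp [S, prefixThrough_sub_one, hW]
  refine length_prefixThrough_le_of_forall_eq_nil (fun y (hy : y ∈ S) => ?_) u
  by_contra hne
  have hvisit : y ∈ t :: os' := not_imp_comm.1 walkBlocks_eq_nil_of_notMem hne
  obtain ⟨x, hx, v, hlast, hexit⟩ := exists_last_exit hend_notMem ⟨y, hvisit, hy⟩
  have hcount_eq := count_prefixThrough_eq_of_exit hW (walkBlocks_balanced hend) hx hexit
  have hcount_lt := count_lt_count_of_isPrefix
    (prefixThrough_isPrefix_of_length_le hW hx.le) hx
    (hlast.trans (suffix_prefixThrough s (walkBlocks t os') x))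
  exact hcount_lt.ne hcount_eq

theorem walkBlocks_eq_of_walkWord_eq {t : ZMod m} {os os' : List (ZMod m)}
    (h : walkWord t os = walkWord t os') : walkBlocks t os = walkBlocks t os' := by
  have hend : os.getLastD t = os'.getLastD t := by
    rw [getLastD_eq_add_sum_concatFrom, ← walkWord, h, walkWord, ← getLastD_eq_add_sum_concatFrom]
  have hW : concatFrom m (os.getLastD t + 1) (walkBlocks t os) =
      concatFrom m (os.getLastD t + 1) (walkBlocks t os') := by
    rwa [walkWord, walkWord, ← hend] at h
  refine prefixThrough_injective (os.getLastD t + 1) (funext fun u => ?_)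
  have hle := length_prefixThrough_walkBlocks_le (congrArg (· + 1) hend) hW u
  have hge := length_prefixThrough_walkBlocks_le rfl hW.symm u
  exact (prefixThrough_isPrefix_of_length_le hW hge).eq_of_length (hge.antisymm hle)

theorem walkWord_injective (t : ZMod m) : Function.Injective (walkWord t) := by
  intro os os' h
  have hlen : os.length = os'.length := by rw [← length_walkWord t, h, length_walkWord]
  have hrec := recover_walkBlocks t os
  rw [walkBlocks_eq_of_walkWord_eq h, hlen, recover_walkBlocks] at hrec
  exact (Prod.mk.inj (Option.some.inj hrec)).1.symm

theorem walkWord_bijective (t : ZMod m) : Function.Bijective (walkWord t) := by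
  refine ⟨walkWord_injective t, fun W => ?_⟩
  let φ : List.Vector (ZMod m) W.length → List.Vector (ZMod m) W.length :=
    fun os => ⟨walkWord t os.1, (length_walkWord t os.1).trans os.2⟩
  have hφ : Function.Injective φ := fun _ _ h =>
    Subtype.ext (walkWord_injective t (congrArg Subtype.val h))
  obtain ⟨os, hos⟩ := Finite.surjective_of_injective hφ ⟨W, rfl⟩
  exact ⟨os.1, congrArg Subtype.val hos⟩

end WalkWord

theorem successful_partition_unique_general {m : ℕ} [NeZero m] (t : ZMod m)
    (W : List (ZMod m)) :
    ∃! B : ZMod m → List (ZMod m), concatFrom m (t + W.sum + 1) B = W ∧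
      ∃ out, recover m W.length t B = some (out, fun _ => []) := by
  obtain ⟨os, rfl, hunique⟩ := (walkWord_bijective t).existsUnique W
  refine ⟨walkBlocks t os, ⟨concatFrom_walkBlocks_eq_iff.2 rfl, os, ?_⟩, ?_⟩
  · rw [length_walkWord, recover_walkBlocks]
  · rintro B ⟨hB, out, hout⟩
    obtain ⟨-, rfl⟩ := walkBlocks_of_recover hout
    rw [hunique out (concatFrom_walkBlocks_eq_iff.1 hB)]

/-- Every word of length `k+1` over `ℤ/mℤ` admits exactly one successful partition: a splitting
into `m` consecutive blocks labeled cyclically starting with `σ+1` (where `σ` is the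
sum of the word), on which the recovery algorithm removes all letters, never reading
from an empty block. -/
theorem successful_partition_unique (m k : ℕ) (hm : 1 ≤ m)
    (w : Fin (k + 1) → ZMod m) :
    ∃! B : ZMod m → List (ZMod m),
      concatFrom m ((∑ i, w i) + 1) B = List.ofFn w ∧
      ∃ out, recover m (k + 1) 0 B = some (out, fun _ => []) := by
  have : NeZero m := NeZero.of_pos hm
  simpa only [zero_add, List.sum_ofFn, List.length_ofFn] using
    successful_partition_unique_general 0 (List.ofFn w)
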